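/- Let B = B_q(α,γ,δ,b) be a multivariate BCH code with γ = {k}, δ = {δ_k} and b = {b_k}, for some k ∈ {1,…,s}. If r_k = q − 1, then d_α*(B) = δ_k and dim_{F_q}(B) = (r_k − δ_k + 1)·∏_{j≠k} r_j. -/

import Mathlib

open Classical

noncomputable section

namespace AbelianCodes

/-- The index set `I = Z_{r 0} × ⋯ × Z_{r (s-1)}`. -/
abbrev Idx {s : ℕ} (r : Fin s → ℕ) : Type := ∀ k, ZMod (r k)

variable {F : Type*} [Field F]

/-- The support of a hypermatrix. -/
def hsupp {s : ℕ} {r : Fin s → ℕ} (M : Idx r → F) : Set (Idx r) := {i | M i ≠ 0}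

/-- The hypercolumn `H_M(k,b)` of a hypermatrix, viewed as an `(s-1)`-dimensional
hypermatrix indexed by `∏_{j ≠ k} Z_{r j}`. -/
def hypercol {s : ℕ} {r : Fin (s+1) → ℕ} (M : Idx r → F) (k : Fin (s+1)) (b : ZMod (r k)) :
    Idx (fun j => r (k.succAbove j)) → F :=
  fun i => M (k.insertNth b i)

/-- `ω_M(k,b)`: the number of consecutive zero hypercolumns
`H_M(k,b+1), H_M(k,b+2), …` (indices modulo `r k`). -/
def runLen {s : ℕ} {r : Fin (s+1) → ℕ} (M : Idx r → F) (k : Fin (s+1)) (b : ZMod (r k)) : ℕ :=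
  ((Finset.Ico 1 (r k)).filter
    (fun j => ∀ m : ℕ, m ∈ Finset.Icc 1 j → hypercol M k (b + (m : ZMod (r k))) = 0)).card

/-- The apparent distance `d*(M)` of a hypermatrix, defined recursively on the
number of variables.  (A `0`-dimensional hypermatrix is a scalar, of apparent
distance `1` if nonzero and `0` otherwise; with this convention the `1`-dimensional
case becomes `max {ω_M(b)+1 : a_b ≠ 0}` and the higher-dimensional case becomes
`max_k max {(ω_M(k,b)+1)·d*(H_M(k,b)) : H_M(k,b) ≠ 0}`, since zero hypermatrices
have apparent distance `0`.) -/
def apd : {s : ℕ} → (r : Fin s → ℕ) → (Idx r → F) → ℕ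
  | 0, _, M => if M finZeroElim = 0 then 0 else 1
  | _+1, r, M =>
      Finset.univ.sup fun k =>
        Finset.univ.sup fun b : Fin (r k) =>
          (runLen M k ((b : ℕ) : ZMod (r k)) + 1) *
            apd (fun j => r (k.succAbove j)) (hypercol M k ((b : ℕ) : ZMod (r k)))

/-- The `q^t`-orbit `Q_t(a)` of `a ∈ I`. -/
def qOrbit {s : ℕ} (r : Fin s → ℕ) (q t : ℕ) (a : Idx r) : Set (Idx r) :=
  {i | ∃ n : ℕ, ∀ k, i k = (q : ZMod (r k)) ^ (t * n) * a k}

/-- `D` is a union of `q^t`-orbits. -/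
def OrbitUnion {s : ℕ} (r : Fin s → ℕ) (q t : ℕ) (D : Set (Idx r)) : Prop :=
  ∀ a ∈ D, qOrbit r q t a ⊆ D

/-- The hypermatrix afforded by `D ⊆ I`: entry `0` at indices in `D`, entry `1` elsewhere. -/
def afforded {s : ℕ} (r : Fin s → ℕ) (D : Set (Idx r)) : Idx r → F :=
  fun i => if i ∈ D then 0 else 1

/-- `M` is a `q^t`-orbits hypermatrix, i.e. the hypermatrix afforded by some union
of `q^t`-orbits. -/
def IsOrbitMx {s : ℕ} (r : Fin s → ℕ) (q t : ℕ) (M : Idx r → F) : Prop :=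
  ∃ D : Set (Idx r), OrbitUnion r q t D ∧ M = afforded r D

/-- The minimum apparent distance `mad(M) = min {d*(P) : P a q^t-orbits hypermatrix,
`0 ≠ P ≤ M`}`, where `P ≤ M` means `supp P ⊆ supp M`. -/
def mad {s : ℕ} (r : Fin s → ℕ) (q t : ℕ) (M : Idx r → F) : ℕ :=
  sInf {d | ∃ P : Idx r → F, IsOrbitMx r q t P ∧ P ≠ 0 ∧ hsupp P ⊆ hsupp M ∧ apd r P = d}

/-- The `q^t`-cyclotomic coset of `b` modulo `r`. -/
def cycCoset (r q t : ℕ) (b : ZMod r) : Set (ZMod r) :=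
  {x | ∃ n : ℕ, x = (q : ZMod r) ^ (t * n) * b}



variable {F : Type*} [Field F] {L : Type*} [Field L] [Algebra F L]

/-- An abelian code: a subspace of the group algebra `F[∏ Z_{r k}]` (identified
with the space of coefficient functions `I → F`) which is closed under all
translations, i.e. an ideal. -/
def IsAbelianCode {s : ℕ} {r : Fin s → ℕ} (C : Submodule F (Idx r → F)) : Prop :=
  ∀ f ∈ C, ∀ a : Idx r, (fun i => f (i - a)) ∈ C

/-- Convolution: the multiplication of the group algebra in the coefficient
function picture. -/
def conv {s : ℕ} {r : Fin s → ℕ} [∀ k, NeZero (r k)] (f g : Idx r → F) : Idx r → F :=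
  fun i => ∑ u : Idx r, f u * g (i - u)

/-- The (discrete) Fourier transform `φ_{α,f}(j) = f(α^j)` of a coefficient
function `f : I → F` with respect to `α`, with values in the extension `L`. -/
def fourier {s : ℕ} {r : Fin s → ℕ} [∀ k, NeZero (r k)] (α : Fin s → L) (f : Idx r → F) :
    Idx r → L :=
  fun j => ∑ i : Idx r, algebraMap F L (f i) * ∏ k, α k ^ ((i k).val * (j k).val)

/-- The Hamming weight of a codeword. -/
def wt {s : ℕ} {r : Fin s → ℕ} [∀ k, NeZero (r k)] (f : Idx r → F) : ℕ :=
  (Finset.univ.filter fun i : Idx r => f i ≠ 0).card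

/-- The minimum distance of a code. -/
def dmin {s : ℕ} {r : Fin s → ℕ} [∀ k, NeZero (r k)] (C : Submodule F (Idx r → F)) : ℕ :=
  sInf {w | ∃ f ∈ C, f ≠ (0 : Idx r → F) ∧ wt f = w}

/-- The defining set `D_α(C) = {a ∈ I : f(α^a) = 0 for all f ∈ C}`. -/
def defSet {s : ℕ} (r : Fin s → ℕ) [∀ k, NeZero (r k)] (α : Fin s → L)
    (C : Submodule F (Idx r → F)) : Set (Idx r) :=
  {a | ∀ f ∈ C, fourier α f a = 0}

/-- The apparent distance of a code `C` with respect to `α`: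
`d_α*(C) = min {d*(M(φ_{α,e})) : 0 ≠ e = e² ∈ C}`. -/
def dStarAlpha {s : ℕ} (r : Fin s → ℕ) [∀ k, NeZero (r k)] (α : Fin s → L)
    (C : Submodule F (Idx r → F)) : ℕ :=
  sInf {d | ∃ e, e ∈ C ∧ e ≠ (0 : Idx r → F) ∧ conv e e = e ∧ apd r (fourier α e) = d}

/-- The apparent distance of a code: `d*(C) = max {d_β*(C) : β ∈ U}`, where `U`
is the set of tuples of primitive roots of unity in `L`. -/
def dStarCode {s : ℕ} (r : Fin s → ℕ) [∀ k, NeZero (r k)] (L : Type*) [Field L] [Algebra F L]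
    (C : Submodule F (Idx r → F)) : ℕ :=
  sSup {d | ∃ α : Fin s → L, (∀ k, IsPrimitiveRoot (α k) (r k)) ∧ dStarAlpha r α C = d}

/-- The defining set of the multivariate BCH code `B_q(α,γ,δ,b)`:
`∪_{k∈γ} ∪_{l=0}^{δ_k−2} ∪_{i ∈ I(k, b_k+l)} Q(i)`. -/
def bchDefSet {s : ℕ} (r : Fin s → ℕ) (q : ℕ) (γ : Finset (Fin s)) (δ b : Fin s → ℕ) :
    Set (Idx r) :=
  ⋃ k ∈ γ, ⋃ l ∈ Finset.range (δ k - 1),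
    ⋃ i ∈ {i : Idx r | i k = ((b k + l : ℕ) : ZMod (r k))}, qOrbit r q 1 i



lemma apd_const {K : Type*} [Field K] (x : K) : ∀ {s : ℕ} (r : Fin s → ℕ) [∀ k, NeZero (r k)],
    apd r (fun _ : Idx r => x) ≤ 1
  | 0, r, _ => by
      rw [apd]; split_ifs <;> simp
  | s+1, r, _ => by
      rw [apd]
      refine Finset.sup_le fun k _ => Finset.sup_le fun b _ => ?_
      have h2 : hypercol (fun _ : Idx r => x) k ((b : ℕ) : ZMod (r k)) = fun _ => x := rfl
      rw [h2]
      have ih := apd_const x (fun j => r (k.succAbove j))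
      by_cases hx : x = 0
      · have : ∀ {s : ℕ} (r : Fin s → ℕ), apd r (fun _ : Idx r => (0:K)) = 0 := by
          intro s
          induction s with
          | zero => intro r; rw [apd]; simp
          | succ n ih =>
            intro r
            rw [apd]
            refine Nat.le_zero.1 (Finset.sup_le fun k _ => Finset.sup_le fun b _ => ?_)
            have h2 : hypercol (fun _ : Idx r => (0:K)) k ((b : ℕ) : ZMod (r k)) = fun _ => 0 := rfl
            rw [h2, ih]; simp
        rw [hx, this]; simp
      · have : runLen (fun _ : Idx r => x) k ((b : ℕ) : ZMod (r k)) = 0 := by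
          unfold runLen
          rw [Finset.card_eq_zero, Finset.eq_empty_iff_forall_notMem]
          intro j hj'
          obtain ⟨hj, hh⟩ := (@Finset.mem_filter _ _ (_) _ _).1 hj'
          have := congrFun (hh 1 (by simp at hj ⊢; omega)) 0
          exact hx this
        rw [this]; simpa using ih

lemma apd_zero_fun {K : Type*} [Field K] {s : ℕ} (r : Fin s → ℕ) :
    apd r (fun _ : Idx r => (0:K)) = 0 := by
  induction s with
  | zero => rw [apd]; simp
  | succ n ih =>
    rw [apd]
    refine Nat.le_zero.1 (Finset.sup_le fun k _ => Finset.sup_le fun b _ => ?_)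
    have h2 : hypercol (fun _ : Idx r => (0:K)) k ((b : ℕ) : ZMod (r k)) = fun _ => 0 := rfl
    rw [h2, ih]; simp

lemma apd_pos {K : Type*} [Field K] {s : ℕ} (r : Fin s → ℕ) [∀ k, NeZero (r k)]
    (M : Idx r → K) (hM : M ≠ 0) : 1 ≤ apd r M := by
  induction s with
  | zero =>
    rw [apd]
    rw [if_neg]
    intro h
    apply hM
    funext i
    rw [Subsingleton.elim i finZeroElim]
    exact h
  | succ n ih =>
    obtain ⟨i, hi⟩ := Function.ne_iff.1 hM
    have hne : hypercol M 0 (i 0) ≠ 0 := by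
      intro h
      apply hi
      have := congrFun h (fun j => i (Fin.succAbove 0 j))
      unfold hypercol at this
      have h3 : (Fin.insertNth (0 : Fin (n+1)) (i 0) (fun j => i (Fin.succAbove 0 j)) : Idx r) = i :=
        Fin.insertNth_self_removeNth 0 i
      rw [h3] at this
      exact this
    have h1 := ih (fun j => r (Fin.succAbove 0 j)) (hypercol M 0 (i 0)) hne
    rw [apd]
    refine le_trans ?_ (Finset.le_sup (Finset.mem_univ (0 : Fin (n+1))))
    refine le_trans ?_ (Finset.le_sup (Finset.mem_univ (⟨(i 0).val, ZMod.val_lt _⟩ : Fin (r 0))))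
    simp only [ZMod.natCast_zmod_val]
    nlinarith

lemma apd_ind_le {K : Type*} [Field K] {s : ℕ} (r : Fin s → ℕ) [∀ k, NeZero (r k)]
    (k : Fin s) (W : Finset (ZMod (r k))) (hW : W.card < r k) :
    apd r (fun i : Idx r => if i k ∈ W then (0:K) else 1) ≤ W.card + 1 := by
  induction s with
  | zero => exact k.elim0
  | succ n ih =>
    rw [apd]
    refine Finset.sup_le fun j _ => Finset.sup_le fun b _ => ?_
    obtain ⟨c, hc⟩ : ∃ c, c ∉ W := by
      by_contra! h
      have : W = Finset.univ := Finset.eq_univ_iff_forall.2 h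
      rw [this, Finset.card_univ, ZMod.card] at hW
      exact lt_irrefl _ hW
    rcases Fin.eq_self_or_eq_succAbove j k with rfl | ⟨k', rfl⟩
    · have h1 : ∀ x : ZMod (r k), hypercol (fun i : Idx r => if i k ∈ W then (0:K) else 1) k x
          = fun _ => if x ∈ W then (0:K) else 1 := by
        intro x; funext i; simp [hypercol]
      have h2 : runLen (fun i : Idx r => if i k ∈ W then (0:K) else 1) k ((b : ℕ) : ZMod (r k))
          ≤ W.card := by
        unfold runLen
        have : W.card = (Finset.Ico 1 (W.card + 1)).card := by simp
        rw [this]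
        apply Finset.card_le_card
        intro j hj
        obtain ⟨hj12, hj3⟩ := (@Finset.mem_filter _ _ (_) _ _).1 hj
        obtain ⟨hj1, hj2⟩ := Finset.mem_Ico.1 hj12
        rw [Finset.mem_Ico]
        refine ⟨hj1, Nat.lt_succ_of_le ?_⟩
        have hc : (Finset.Icc 1 j).card ≤ W.card := by
          apply Finset.card_le_card_of_injOn (fun m : ℕ => ((b : ℕ) : ZMod (r k)) + (m : ZMod (r k)))
          · intro m hm
            have := hj3 m hm
            rw [h1] at this
            have := congrFun this 0
            by_contra hn
            have hn' : ((b : ℕ) : ZMod (r k)) + (m : ZMod (r k)) ∉ W := hn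
            simp [hn'] at this
          · intro m hm m' hm' hmm
            have := add_left_cancel hmm
            simp only [Finset.coe_Icc, Set.mem_Icc] at hm hm'
            have := congrArg ZMod.val this
            rwa [ZMod.val_natCast_of_lt (by omega), ZMod.val_natCast_of_lt (by omega)] at this
        simpa using hc
      rw [h1]
      have := apd_const (if ((b : ℕ) : ZMod (r k)) ∈ W then (0:K) else 1) (fun j => r (k.succAbove j))
      nlinarith
    · have h1 : ∀ x : ZMod (r j), hypercol (fun i : Idx r => if i (j.succAbove k') ∈ W then (0:K) else 1) j x
          = fun i => if i k' ∈ W then (0:K) else 1 := by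
        intro x; funext i; simp [hypercol]
      have h2 : runLen (fun i : Idx r => if i (j.succAbove k') ∈ W then (0:K) else 1) j ((b : ℕ) : ZMod (r j))
          = 0 := by
        unfold runLen
        rw [Finset.card_eq_zero, Finset.eq_empty_iff_forall_notMem]
        intro t ht'
        obtain ⟨ht, hh⟩ := (@Finset.mem_filter _ _ (_) _ _).1 ht'
        have := hh 1 (by simp at ht ⊢; omega)
        rw [h1] at this
        have := congrFun this (Function.update 0 k' c)
        simp [hc] at this
      rw [h1, h2]
      have := ih (fun i => r (j.succAbove i)) k' W hW
      simpa using this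

lemma apd_ge {K : Type*} [Field K] {s : ℕ} (r : Fin s → ℕ) [∀ k, NeZero (r k)]
    (k : Fin s) (M : Idx r → K) (hM : M ≠ 0) (b d : ℕ) (hd1 : 2 ≤ d) (hd2 : d ≤ r k)
    (hz : ∀ i : Idx r, ∀ l < d - 1, i k = ((b + l : ℕ) : ZMod (r k)) → M i = 0) :
    d ≤ apd r M := by
  cases s with
  | zero => exact k.elim0
  | succ n =>
    obtain ⟨i, hi⟩ := Function.ne_iff.1 hM
    have hne : hypercol M k (i k) ≠ 0 := by
      intro h
      apply hi
      have := congrFun h (fun j => i (Fin.succAbove k j))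
      unfold hypercol at this
      have h3 : (Fin.insertNth k (i k) (fun j => i (Fin.succAbove k j)) : Idx r) = i :=
        Fin.insertNth_self_removeNth k i
      rw [h3] at this
      exact this
    have hzero : ∀ l < d - 1, hypercol M k ((b + l : ℕ) : ZMod (r k)) = 0 := by
      intro l hl
      funext x
      exact hz _ l hl (by simp)
    have hex : ∃ t : ℕ, hypercol M k ((b : ZMod (r k)) - (t : ZMod (r k))) ≠ 0 := by
      refine ⟨((b : ZMod (r k)) - i k).val, ?_⟩
      rw [ZMod.natCast_zmod_val]
      simpa using hne
    set t := Nat.find hex with ht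
    have ht1 : hypercol M k ((b : ZMod (r k)) - (t : ZMod (r k))) ≠ 0 := Nat.find_spec hex
    have ht2 : ∀ u < t, hypercol M k ((b : ZMod (r k)) - (u : ZMod (r k))) = 0 := by
      intro u hu
      by_contra h
      exact Nat.find_min hex hu h
    have ht0 : t ≠ 0 := by
      intro h0
      rw [h0] at ht1
      apply ht1
      simpa using hzero 0 (by omega)
    set c := (b : ZMod (r k)) - (t : ZMod (r k)) with hc
    have hrun : d - 1 ≤ runLen M k c := by
      unfold runLen
      have : d - 1 = (Finset.Ico 1 d).card := by simp
      rw [this]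
      apply Finset.card_le_card
      intro j hj
      rw [Finset.mem_Ico] at hj
      refine (@Finset.mem_filter _ _ (_) _ _).2 ⟨Finset.mem_Ico.2 ⟨hj.1, by omega⟩, ?_⟩
      intro m hm
      rw [Finset.mem_Icc] at hm
      by_cases hmt : m ≤ t
      · have := ht2 (t - m) (by omega)
        rw [Nat.cast_sub hmt] at this
        rw [← this, hc]
        congr 1
        ring
      · have := hzero (m - t) (by omega)
        rw [Nat.cast_add, Nat.cast_sub (by omega)] at this
        rw [← this, hc]
        congr 1
        ring
    have h1 := apd_pos (fun j => r (k.succAbove j)) _ ht1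
    rw [apd]
    refine le_trans ?_ (Finset.le_sup (Finset.mem_univ k))
    refine le_trans ?_ (Finset.le_sup (Finset.mem_univ (⟨c.val, ZMod.val_lt _⟩ : Fin (r k))))
    simp only [ZMod.natCast_zmod_val]
    have : d ≤ (runLen M k c + 1) * 1 := by omega
    exact this.trans (Nat.mul_le_mul_left _ h1)


/-- One-dimensional character values. -/
def pw {K : Type*} [Field K] {n : ℕ} (a : K) (x y : ZMod n) : K := a ^ (x.val * y.val)

lemma pw_comm {K : Type*} [Field K] {n : ℕ} (a : K) (x y : ZMod n) : pw a x y = pw a y x := by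
  unfold pw; rw [mul_comm]

lemma pw_add {K : Type*} [Field K] {n : ℕ} [NeZero n] {a : K} (ha : a ^ n = 1) (x y z : ZMod n) :
    pw a (x + y) z = pw a x z * pw a y z := by
  unfold pw
  rw [← pow_add, ← add_mul, pow_mul, pow_mul, ZMod.val_add, ← pow_eq_pow_mod _ ha]

lemma pw_zero {K : Type*} [Field K] {n : ℕ} [NeZero n] (a : K) (z : ZMod n) :
    pw a 0 z = 1 := by
  simp [pw]

lemma pw_neg_mul {K : Type*} [Field K] {n : ℕ} [NeZero n] {a : K} (ha : a ^ n = 1) (x z : ZMod n) :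
    pw a (-x) z * pw a x z = 1 := by
  rw [← pw_add ha, neg_add_cancel, pw_zero]

lemma pw_neg {K : Type*} [Field K] {n : ℕ} [NeZero n] {a : K} (ha : a ^ n = 1) (x z : ZMod n) :
    pw a (-x) z = pw a x (-z) := by
  have h1 := pw_neg_mul ha x z
  have h2 := pw_neg_mul ha z x
  rw [pw_comm a (-z), pw_comm a z] at h2
  exact mul_right_cancel₀ (right_ne_zero_of_mul_eq_one h1) (h1.trans h2.symm)

lemma pw_orth {K : Type*} [Field K] {n : ℕ} [NeZero n] {a : K} (ha : IsPrimitiveRoot a n)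
    (x : ZMod n) : ∑ m : ZMod n, pw a m x = if x = 0 then (n : K) else 0 := by
  split_ifs with h
  · subst h
    simp [pw]
  · have hn : n ≠ 1 := by
      rintro rfl
      exact h (Subsingleton.elim _ _)
    have h1 : pw a 1 x ≠ 1 := by
      unfold pw
      rw [ZMod.val_one'' hn, one_mul]
      exact ha.pow_ne_one_of_pos_of_lt (by simpa using h) (ZMod.val_lt x)
    have h2 : (∑ m : ZMod n, pw a m x) * pw a 1 x = ∑ m : ZMod n, pw a m x := by
      rw [Finset.sum_mul]
      simp_rw [← pw_add ha.pow_eq_one]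
      exact Equiv.sum_comp (Equiv.addRight (1 : ZMod n)) (fun m => pw a m x)
    have h3 : (∑ m : ZMod n, pw a m x) * (pw a 1 x - 1) = 0 := by
      rw [mul_sub, h2]; simp
    rcases mul_eq_zero.1 h3 with h4 | h4
    · exact h4
    · exact absurd (sub_eq_zero.1 h4) h1

/-- Multi-dimensional character values. -/
def chi {K : Type*} [Field K] {s : ℕ} {r : Fin s → ℕ} (α : Fin s → K) (i j : Idx r) : K :=
  ∏ k, pw (α k) (i k) (j k)

section four

variable {s : ℕ} {r : Fin s → ℕ} [∀ k, NeZero (r k)] {F : Type*} [Field F]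
  {L : Type*} [Field L] [Algebra F L] {α : Fin s → L}

lemma fourier_eq (f : Idx r → F) (j : Idx r) :
    fourier α f j = ∑ i, algebraMap F L (f i) * chi α i j := rfl

lemma chi_add (hα : ∀ k, IsPrimitiveRoot (α k) (r k)) (x y z : Idx r) :
    chi α (x + y) z = chi α x z * chi α y z := by
  unfold chi
  rw [← Finset.prod_mul_distrib]
  exact Finset.prod_congr rfl fun k _ => pw_add (hα k).pow_eq_one _ _ _

lemma chi_comm (x y : Idx r) : chi α x y = chi α y x := by
  unfold chi
  exact Finset.prod_congr rfl fun k _ => pw_comm _ _ _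

lemma chi_neg (hα : ∀ k, IsPrimitiveRoot (α k) (r k)) (x y : Idx r) :
    chi α (-x) y = chi α x (-y) := by
  unfold chi
  exact Finset.prod_congr rfl fun k _ => pw_neg (hα k).pow_eq_one _ _

lemma chi_orth (hα : ∀ k, IsPrimitiveRoot (α k) (r k)) (x : Idx r) :
    ∑ j : Idx r, chi α x j = if x = 0 then ∏ k, (r k : L) else 0 := by
  unfold chi
  have h := (Finset.prod_univ_sum (fun k => (Finset.univ : Finset (ZMod (r k))))
    (fun k y => pw (α k) (x k) y)).symm
  rw [Fintype.piFinset_univ] at h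
  rw [h]
  have h1 : ∀ k, ∑ y : ZMod (r k), pw (α k) (x k) y = if x k = 0 then (r k : L) else 0 := by
    intro k
    rw [← pw_orth (hα k) (x k)]
    exact Finset.sum_congr rfl fun _ _ => pw_comm _ _ _
  simp_rw [h1]
  split_ifs with hx
  · subst hx; simp
  · obtain ⟨k, hk⟩ := Function.ne_iff.1 hx
    exact Finset.prod_eq_zero (Finset.mem_univ k) (if_neg hk)

lemma r_ne_zero (hα : ∀ k, IsPrimitiveRoot (α k) (r k)) (k : Fin s) : (r k : L) ≠ 0 := by
  have h : IsPrimitiveRoot (α k) ((⟨r k, NeZero.pos _⟩ : ℕ+) : ℕ) := hα k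
  exact h.neZero'.out

lemma fourier_inv (hα : ∀ k, IsPrimitiveRoot (α k) (r k)) (f : Idx r → F) (x : Idx r) :
    ∑ j, fourier α f j * chi α (-x) j = algebraMap F L (f x) * ∏ k, (r k : L) := by
  simp_rw [fourier_eq, Finset.sum_mul]
  rw [Finset.sum_comm]
  simp_rw [mul_assoc, ← chi_add hα, ← Finset.mul_sum, chi_orth hα]
  rw [Finset.sum_eq_single x]
  · simp
  · intro y _ hy
    rw [if_neg, mul_zero]
    intro h
    exact hy (by rwa [← sub_eq_add_neg, sub_eq_zero] at h)
  · simp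

lemma fourier_inj (hα : ∀ k, IsPrimitiveRoot (α k) (r k)) (f g : Idx r → F)
    (h : fourier α f = fourier α g) : f = g := by
  funext x
  have h1 := fourier_inv hα f x
  rw [h, fourier_inv hα g x] at h1
  have h2 : ∏ k, (r k : L) ≠ 0 := Finset.prod_ne_zero_iff.2 fun k _ => r_ne_zero hα k
  exact ((algebraMap F L).injective (mul_right_cancel₀ h2 h1)).symm

lemma fourier_zero' : fourier α (0 : Idx r → F) = 0 := by
  funext j; simp [fourier_eq]

lemma fourier_shift (hα : ∀ k, IsPrimitiveRoot (α k) (r k)) (f : Idx r → F) (a j : Idx r) :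
    fourier α (fun i => f (i + a)) j = chi α (-a) j * fourier α f j := by
  rw [fourier_eq, fourier_eq, Finset.mul_sum]
  rw [← Equiv.sum_comp (Equiv.addRight a) (fun i => chi α (-a) j * (algebraMap F L (f i) * chi α i j))]
  refine Finset.sum_congr rfl fun i _ => ?_
  have : chi α i j = chi α (-a) j * chi α (i + a) j := by
    rw [← chi_add hα]; congr 1; abel
  simp only [Equiv.coe_addRight]
  rw [this]; ring

lemma fourier_conv (hα : ∀ k, IsPrimitiveRoot (α k) (r k)) (f g : Idx r → F) (j : Idx r) :
    fourier α (conv f g) j = fourier α f j * fourier α g j := by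
  have h : ∀ u : Idx r, chi α u j * fourier α g j = ∑ i, algebraMap F L (g (i - u)) * chi α i j := by
    intro u
    have := fourier_shift hα g (-u) j
    rw [neg_neg] at this
    rw [← this, fourier_eq]
    simp_rw [sub_eq_add_neg]
  rw [fourier_eq f j, Finset.sum_mul]
  simp_rw [mul_assoc, h, fourier_eq, conv, map_sum, map_mul, Finset.sum_mul, Finset.mul_sum]
  rw [Finset.sum_comm]
  simp_rw [mul_assoc]

lemma fourier_corr (hα : ∀ k, IsPrimitiveRoot (α k) (r k)) (f g : Idx r → F) (j : Idx r) :
    fourier α (fun a => ∑ u, f u * g (u + a)) j = fourier α f (-j) * fourier α g j := by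
  have h : ∀ u : Idx r, chi α u (-j) * fourier α g j = ∑ i, algebraMap F L (g (u + i)) * chi α i j := by
    intro u
    rw [← chi_neg hα, ← fourier_shift hα g u j, fourier_eq]
    simp_rw [add_comm]
  rw [fourier_eq f (-j), Finset.sum_mul]
  simp_rw [mul_assoc, h, fourier_eq, map_sum, map_mul, Finset.sum_mul, Finset.mul_sum]
  rw [Finset.sum_comm]
  simp_rw [mul_assoc]

lemma mem_of_fourier (hα : ∀ k, IsPrimitiveRoot (α k) (r k)) (B : Submodule F (Idx r → F))
    (hB : IsAbelianCode B) (f : Idx r → F) (hf : ∀ j ∈ defSet r α B, fourier α f j = 0) :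
    f ∈ B := by
  by_contra hfB
  obtain ⟨φ, hφ, hφB⟩ := Submodule.exists_le_ker_of_notMem hfB
  set c : Idx r → F := fun i => φ (Pi.single i 1) with hc
  have hφe : ∀ g, φ g = ∑ i, g i * c i := by
    intro g
    rw [LinearMap.pi_apply_eq_sum_univ φ g]
    refine Finset.sum_congr rfl fun i _ => ?_
    rw [smul_eq_mul, hc]
    congr 2
    funext x
    simp [Pi.single_apply, eq_comm]
  have hz : ∀ g ∈ B, (fun a => ∑ u, g u * c (u + a)) = 0 := by
    intro g hg
    funext a
    have h1 : φ (fun i => g (i - a)) = 0 := hφB (hB g hg a)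
    rw [hφe, ← Equiv.sum_comp (Equiv.addRight a)] at h1
    simpa using h1
  have hff : (fun a => ∑ u, f u * c (u + a)) = 0 := by
    apply fourier_inj hα
    funext j
    rw [fourier_corr hα, fourier_zero']
    by_cases hj : -j ∈ defSet r α B
    · rw [hf _ hj]; simp
    · have hj' : ¬ ∀ g ∈ B, fourier α g (-j) = 0 := hj
      push Not at hj'
      obtain ⟨g, hg, hgj⟩ := hj'
      have := fourier_corr hα g c j
      rw [hz g hg, fourier_zero'] at this
      rcases mul_eq_zero.1 this.symm with h | h
      · exact absurd h hgj
      · rw [h]; simp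
  apply hφ
  rw [hφe]
  simpa using congrFun hff 0

/-- The partial projection in direction `k`. -/
def gproj (k : Fin s) (a : F) (c : ZMod (r k)) (f : Idx r → F) : Idx r → F :=
  fun i => ∑ m : ZMod (r k), f (i + Pi.single k m) * pw a m c

lemma fourier_gproj (hα : ∀ k, IsPrimitiveRoot (α k) (r k)) (k : Fin s) (a : F)
    (ha : algebraMap F L a = α k) (c : ZMod (r k)) (f : Idx r → F) (j : Idx r) :
    fourier α (gproj k a c f) j = if j k = c then (r k : L) * fourier α f j else 0 := by
  have h0 : ∀ m : ZMod (r k), algebraMap F L (pw a m c) = pw (α k) m c := by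
    intro m; simp [pw, ha]
  have h1 : ∀ m : ZMod (r k), chi α (-(Pi.single k m : Idx r)) j = pw (α k) m (- j k) := by
    intro m
    rw [← pw_neg (hα k).pow_eq_one]
    unfold chi
    rw [Finset.prod_eq_single k]
    · simp
    · intro b _ hb
      simp [hb, pw_zero]
    · simp
  have h2 : fourier α (gproj k a c f) j =
      ∑ m : ZMod (r k), pw (α k) m c * fourier α (fun i => f (i + Pi.single k m)) j := by
    simp_rw [fourier_eq, gproj, map_sum, map_mul, h0, Finset.sum_mul, Finset.mul_sum]
    rw [Finset.sum_comm]
    refine Finset.sum_congr rfl fun _ _ => Finset.sum_congr rfl fun _ _ => by ring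
  rw [h2]
  simp_rw [fourier_shift hα, h1, ← mul_assoc, ← Finset.sum_mul]
  have h3 : ∀ m : ZMod (r k), pw (α k) m c * pw (α k) m (- j k) = pw (α k) m (c - j k) := by
    intro m
    rw [pw_comm _ m c, pw_comm _ m, ← pw_add (hα k).pow_eq_one, pw_comm, sub_eq_add_neg]
  simp_rw [h3, pw_orth (hα k), sub_eq_zero, eq_comm (a := c), ite_mul, zero_mul]

lemma gproj_base {a : F} (k : Fin s) (ha : a ^ (r k) = 1) (c : ZMod (r k)) (f : Idx r → F) (i : Idx r) :
    gproj k a c f (Function.update i k 0) = pw a (i k) c * gproj k a c f i := by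
  unfold gproj
  rw [Finset.mul_sum, ← Equiv.sum_comp (Equiv.addLeft (i k))]
  refine Finset.sum_congr rfl fun m _ => ?_
  simp only [Equiv.coe_addLeft]
  rw [pw_add ha]
  have : Function.update i k 0 + Pi.single k (i k + m) = i + Pi.single k m := by
    funext x
    by_cases hx : x = k
    · subst hx; simp
    · simp [hx]
  rw [this]; ring

/-- The partial Fourier transform in direction `k`. -/
def ptrans (k : Fin s) (a : F) : (Idx r → F) →ₗ[F] (Idx r → F) where
  toFun f j := gproj k a (j k) f (Function.update j k 0)
  map_add' f g := by
    funext j; simp [gproj, add_mul, Finset.sum_add_distrib]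
  map_smul' c f := by
    funext j; simp [gproj, mul_assoc, Finset.mul_sum]

lemma ptrans_iff (hα : ∀ k, IsPrimitiveRoot (α k) (r k)) (k : Fin s) (a : F)
    (ha : algebraMap F L a = α k) (c : ZMod (r k)) (f : Idx r → F) :
    (∀ j : Idx r, j k = c → fourier α f j = 0) ↔ (∀ j : Idx r, j k = c → ptrans k a f j = 0) := by
  have ha1 : a ^ (r k) = 1 := by
    apply (algebraMap F L).injective
    rw [map_pow, ha, (hα k).pow_eq_one, map_one]
  constructor
  · intro h j hj
    have : gproj k a c f = 0 := by
      apply fourier_inj hα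
      funext j
      rw [fourier_gproj hα k a ha, fourier_zero']
      split_ifs with hc
      · rw [h j hc]; simp
      · rfl
    change gproj k a (j k) f (Function.update j k 0) = 0
    rw [hj, this]; rfl
  · intro h j hj
    have h1 : gproj k a c f = 0 := by
      funext i
      have h2 := h (Function.update i k c) (by simp)
      change gproj k a (Function.update i k c k) f (Function.update (Function.update i k c) k 0) = 0 at h2
      rw [Function.update_idem, Function.update_self, gproj_base k ha1] at h2
      exact (mul_eq_zero.1 h2).resolve_left (right_ne_zero_of_mul_eq_one (pw_neg_mul ha1 (i k) c))
    have h2 := fourier_gproj hα k a ha c f j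
    rw [h1, fourier_zero', if_pos hj] at h2
    exact (mul_eq_zero.1 h2.symm).resolve_left (r_ne_zero hα k)

lemma ptrans_surj (hα : ∀ k, IsPrimitiveRoot (α k) (r k)) (k : Fin s) (a : F)
    (ha : algebraMap F L a = α k) : Function.Surjective (ptrans (r := r) k a) := by
  apply LinearMap.surjective_of_injective
  rw [← LinearMap.ker_eq_bot, LinearMap.ker_eq_bot']
  intro f hf
  apply fourier_inj hα
  funext j
  rw [fourier_zero']
  exact (ptrans_iff hα k a ha (j k) f).2 (fun j _ => by rw [hf]; rfl) j rfl

lemma finrank_code (hα : ∀ k, IsPrimitiveRoot (α k) (r k)) (k : Fin s) (a : F)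
    (ha : algebraMap F L a = α k) (W : Finset (ZMod (r k))) (B : Submodule F (Idx r → F))
    (hB : ∀ f, f ∈ B ↔ ∀ j : Idx r, j k ∈ W → fourier α f j = 0) :
    Module.finrank F B = (r k - W.card) * ∏ j ∈ Finset.univ.erase k, r j := by
  set S : Finset (Idx r) := Fintype.piFinset
    (Function.update (fun i => (Finset.univ : Finset (ZMod (r i)))) k W) with hS
  have hmem : ∀ j, j ∈ S ↔ j k ∈ W := by
    intro j
    rw [hS, Fintype.mem_piFinset]
    constructor
    · intro h; simpa using h k
    · intro h i
      by_cases hi : i = k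
      · subst hi; simpa using h
      · simp [hi]
  have hcard : S.card = W.card * ∏ j ∈ Finset.univ.erase k, r j := by
    rw [hS, Fintype.card_piFinset, ← Finset.mul_prod_erase _ _ (Finset.mem_univ k)]
    simp only [Function.update_self]
    congr 1
    refine Finset.prod_congr rfl fun j hj => ?_
    rw [Function.update_of_ne (Finset.ne_of_mem_erase hj)]
    simp [ZMod.card]
  let R : (Idx r → F) →ₗ[F] (S → F) := (LinearMap.funLeft F F (Subtype.val : S → Idx r)) ∘ₗ ptrans k a
  have hR : Function.Surjective R := by
    have h1 := LinearMap.funLeft_surjective_of_injective F F (Subtype.val : S → Idx r)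
      Subtype.val_injective
    have h2 := h1.comp (ptrans_surj hα k a ha)
    exact h2
  have hker : LinearMap.ker R = B := by
    ext f
    rw [hB, LinearMap.mem_ker]
    constructor
    · intro h j hj
      refine (ptrans_iff hα k a ha (j k) f).2 ?_ j rfl
      intro j' hj'
      exact congrFun h ⟨j', (hmem j').2 (hj' ▸ hj)⟩
    · intro h
      funext ⟨j, hj⟩
      refine (ptrans_iff hα k a ha (j k) f).1 ?_ j rfl
      intro j' hj'
      exact h j' (by rw [hj']; exact (hmem j).1 hj)
  have hrn := LinearMap.finrank_range_add_finrank_ker R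
  rw [LinearMap.range_eq_top.2 hR, finrank_top, hker, Module.finrank_fintype_fun_eq_card,
    Module.finrank_fintype_fun_eq_card, Fintype.card_coe, hcard, Fintype.card_pi,
    ← Finset.mul_prod_erase _ _ (Finset.mem_univ k)] at hrn
  simp only [ZMod.card] at hrn
  rw [Nat.sub_mul]
  omega

end four

lemma exists_root {F : Type*} [Field F] [Fintype F] {L : Type*} [Field L] [Algebra F L]
    (x : L) (n : ℕ) (hn : n = Fintype.card F - 1) (hx : x ^ n = 1) :
    ∃ a : F, algebraMap F L a = x := by
  obtain ⟨g, hg⟩ := IsCyclic.exists_generator (α := Fˣ)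
  have ho : orderOf g = n := by
    rw [orderOf_eq_card_of_forall_mem_zpowers hg, Nat.card_eq_fintype_card, Fintype.card_units, hn]
  have h1 : IsPrimitiveRoot g n := ho ▸ IsPrimitiveRoot.orderOf g
  have h2 : IsPrimitiveRoot (g : F) n := IsPrimitiveRoot.coe_units_iff.2 h1
  have h3 : IsPrimitiveRoot (algebraMap F L g) n := h2.map_of_injective (algebraMap F L).injective
  have : NeZero n := ⟨by
    have := Fintype.one_lt_card (α := F)
    omega⟩
  obtain ⟨i, -, hi⟩ := h3.eq_pow_of_pow_eq_one hx
  exact ⟨(g : F) ^ i, by rw [map_pow, hi]⟩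

lemma bch_mem {s : ℕ} (r : Fin s → ℕ) [∀ k, NeZero (r k)] (q : ℕ) (k : Fin s) (d b : ℕ)
    (hq : (q : ZMod (r k)) = 1) (i : Idx r) :
    i ∈ bchDefSet r q {k} (fun _ => d) (fun _ => b) ↔
      i k ∈ (Finset.range (d - 1)).image (fun l => ((b + l : ℕ) : ZMod (r k))) := by
  simp only [bchDefSet, Finset.mem_singleton, Set.iUnion_iUnion_eq_left, Set.mem_iUnion,
    Finset.mem_image, Set.mem_setOf_eq, exists_prop, qOrbit]
  constructor
  · rintro ⟨l, hl, i', hi', n, hn⟩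
    refine ⟨l, hl, ?_⟩
    rw [hn k, hq, hi']; simp
  · rintro ⟨l, hl, h⟩
    exact ⟨l, hl, i, h.symm, 0, by simp⟩

/-- Let `B = B_q(α,{k},{δ_k},{b_k})` be a multivariate BCH code.
If `r_k = q − 1`, then `d_α*(B) = δ_k` and
`dim_{F_q}(B) = (r_k − δ_k + 1)·∏_{j≠k} r_j`. -/
theorem bch_code_one_face
    {s : ℕ} (r : Fin s → ℕ) [∀ k, NeZero (r k)]
    {F : Type*} [Field F] [Fintype F]
    (hcop : ∀ k, (Fintype.card F).Coprime (r k))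
    (L : Type*) [Field L] [Algebra F L]
    (α : Fin s → L) (hα : ∀ k, IsPrimitiveRoot (α k) (r k))
    (k : Fin s) (δk bk : ℕ) (hδ1 : 2 ≤ δk) (hδ2 : δk ≤ r k)
    (hrk : r k = Fintype.card F - 1)
    (B : Submodule F (Idx r → F)) (hB : IsAbelianCode B)
    (hBdef : defSet r α B = bchDefSet r (Fintype.card F) {k} (fun _ => δk) (fun _ => bk)) :
    dStarAlpha r α B = δk ∧
    Module.finrank F B = (r k - δk + 1) * ∏ j ∈ Finset.univ.erase k, r j := by
  have hq2 : Fintype.card F = r k + 1 := by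
    have := Fintype.one_lt_card (α := F)
    omega
  have hq : ((Fintype.card F : ℕ) : ZMod (r k)) = 1 := by rw [hq2]; simp
  obtain ⟨a, ha⟩ := exists_root (F := F) (α k) (r k) hrk (hα k).pow_eq_one
  set W : Finset (ZMod (r k)) :=
    (Finset.range (δk - 1)).image (fun l => ((bk + l : ℕ) : ZMod (r k))) with hW
  have hWc : W.card = δk - 1 := by
    rw [hW, Finset.card_image_of_injOn, Finset.card_range]
    intro x hx y hy hxy
    simp only [Finset.coe_range, Set.mem_Iio] at hx hy
    simp only [Nat.cast_add] at hxy
    have := congrArg ZMod.val (add_left_cancel hxy)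
    rwa [ZMod.val_natCast_of_lt (by omega), ZMod.val_natCast_of_lt (by omega)] at this
  have hD : ∀ i, i ∈ defSet r α B ↔ i k ∈ W := by
    intro i; rw [hBdef]; exact bch_mem r _ k δk bk hq i
  have hmem : ∀ f, f ∈ B ↔ ∀ j : Idx r, j k ∈ W → fourier α f j = 0 := by
    intro f
    constructor
    · intro hf j hj
      exact (hD j).2 hj f hf
    · intro h
      exact mem_of_fourier hα B hB f fun j hj => h j ((hD j).1 hj)
  constructor
  · have hrF : (r k : F) ≠ 0 := by
      intro h
      apply r_ne_zero hα k
      rw [← map_natCast (algebraMap F L), h, map_zero]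
    let δ0 : Idx r → F := Pi.single 0 1
    have hδ0 : ∀ j, fourier α δ0 j = 1 := by
      intro j
      rw [fourier_eq, Finset.sum_eq_single 0]
      · simp [δ0, chi, pw_zero]
      · intro i _ hi
        simp [δ0, hi]
      · simp
    let e : Idx r → F := fun i => ∑ c ∈ Wᶜ, (r k : F)⁻¹ * gproj k a c δ0 i
    have he : fourier α e = fun j : Idx r => if j k ∈ W then (0:L) else 1 := by
      funext j
      have h1 : fourier α e j = ∑ c ∈ Wᶜ, (r k : L)⁻¹ * fourier α (gproj k a c δ0) j := by
        simp_rw [fourier_eq, e, map_sum, map_mul, map_inv₀, map_natCast, Finset.sum_mul,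
          Finset.mul_sum]
        rw [Finset.sum_comm]
        simp_rw [mul_assoc]
      rw [h1]
      simp_rw [fourier_gproj hα k a ha, hδ0, mul_one, mul_ite, mul_zero,
        inv_mul_cancel₀ (r_ne_zero hα k)]
      rw [Finset.sum_ite_eq]
      by_cases hj : j k ∈ W <;> simp [hj]
    have heB : e ∈ B := by
      rw [hmem]
      intro j hj
      rw [he]; simp [hj]
    have hWlt : W.card < r k := by omega
    have he0 : e ≠ 0 := by
      intro h0
      rw [h0, fourier_zero'] at he
      obtain ⟨c, hc⟩ : ∃ c, c ∉ W := by
        by_contra! h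
        have : W = Finset.univ := Finset.eq_univ_iff_forall.2 h
        rw [this, Finset.card_univ, ZMod.card] at hWlt
        exact lt_irrefl _ hWlt
      have := congrFun he (Function.update 0 k c)
      simp [hc] at this
    have hee : conv e e = e := by
      apply fourier_inj hα
      funext j
      rw [fourier_conv hα, he]
      by_cases hj : j k ∈ W <;> simp [hj]
    have hlow : ∀ f ∈ B, f ≠ 0 → δk ≤ apd r (fourier α f) := by
      intro f hf hf0
      refine apd_ge r k _ ?_ bk δk hδ1 hδ2 ?_
      · intro h
        exact hf0 (fourier_inj hα _ _ (h.trans fourier_zero'.symm))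
      · intro i l hl hi
        refine (hmem f).1 hf i ?_
        rw [hi, hW]
        exact Finset.mem_image.2 ⟨l, Finset.mem_range.2 hl, rfl⟩
    have hup : apd r (fourier α e) ≤ δk := by
      rw [he]
      have := apd_ind_le (K := L) r k W hWlt
      rw [hWc] at this
      omega
    have hmemS : apd r (fourier α e) ∈ {d | ∃ e, e ∈ B ∧ e ≠ (0 : Idx r → F) ∧ conv e e = e ∧
        apd r (fourier α e) = d} := ⟨e, heB, he0, hee, rfl⟩
    apply le_antisymm
    · exact (Nat.sInf_le hmemS).trans hup
    · obtain ⟨f, hf, hf0, -, hfd⟩ := Nat.sInf_mem ⟨_, hmemS⟩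
      unfold dStarAlpha
      rw [← hfd]
      exact hlow f hf hf0
  · rw [finrank_code hα k a ha W B hmem, hWc]
    congr 1
    omega

end AbelianCodes
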